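/- Let p be an odd prime, n ≥ 1, and G a subgroup of GL₂(ℤ/pⁿℤ) such that there exists Q ∈ (ℤ/pⁿℤ)² of order pⁿ with g·Q = Q for all g ∈ G. Then H¹_loc(G, (ℤ/pⁿℤ)²) = 0. -/

import Mathlib

open Matrix

lemma aux_decomp (p : ℕ) (hp : p.Prime) (n : ℕ) (r : ZMod (p ^ n)) :
    ∃ (u : (ZMod (p ^ n))ˣ) (k : ℕ), r = u * (p : ZMod (p ^ n)) ^ k := by
  have : NeZero (p ^ n) := ⟨pow_ne_zero _ hp.ne_zero⟩
  by_cases h : r = 0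
  · refine ⟨1, n, ?_⟩
    have := ZMod.natCast_self (p ^ n)
    push_cast at this
    simp [h, this]
  · have hv : r.val ≠ 0 := by simpa [ZMod.val_eq_zero] using h
    obtain ⟨k, m, hm, hk⟩ := Nat.exists_eq_pow_mul_and_not_dvd hv p hp.ne_one
    have hc : m.Coprime (p ^ n) :=
      Nat.Coprime.pow_right _ ((Nat.Prime.coprime_iff_not_dvd hp).2 hm).symm
    refine ⟨ZMod.unitOfCoprime m hc, k, ?_⟩
    rw [ZMod.coe_unitOfCoprime]
    conv_lhs => rw [← ZMod.natCast_zmod_val r, hk]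
    push_cast
    ring

lemma aux_unit (p : ℕ) (n : ℕ) (e : ZMod (p ^ n)) :
    IsUnit (1 + (p : ZMod (p ^ n)) * e) := by
  have h : IsNilpotent ((p : ZMod (p ^ n)) * e) := by
    refine ⟨n, ?_⟩
    have := ZMod.natCast_self (p ^ n)
    push_cast at this
    rw [mul_pow, this, zero_mul]
  exact h.isUnit_one_add

lemma aux_geom (p : ℕ) (hodd : Odd p) (n : ℕ) (c : ZMod (p ^ n)) :
    ∃ u : (ZMod (p ^ n))ˣ,
      ∑ i ∈ Finset.range p, (1 + (p : ZMod (p ^ n)) * c) ^ i = u * (p : ZMod (p ^ n)) := by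
  obtain ⟨e, he⟩ := odd_sq_dvd_geom_sum₂_sub (a := (1 : ZMod (p ^ n))) (b := c) hodd
  simp only [one_pow, mul_one] at he
  obtain ⟨u, hu⟩ := aux_unit p n e
  refine ⟨u, ?_⟩
  rw [hu]
  linear_combination he

section core
variable {G : Type*} [Group G] {p n : ℕ}
  {d : G →* ZMod (p ^ n)} {b x y : G → ZMod (p ^ n)}

lemma aux_bpow (hb : ∀ g h, b (g * h) = b h + b g * d h) (g : G) (k : ℕ) :
    b (g ^ k) = b g * ∑ i ∈ Finset.range k, d g ^ i := by
  induction k with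
  | zero =>
    have := hb 1 1
    simp at this
    simp [this]
  | succ k ih =>
    rw [pow_succ', hb, ih, Finset.sum_range_succ, map_pow]; ring

lemma aux_bpp (hodd : Odd p) (hb : ∀ g h, b (g * h) = b h + b g * d h) (g : G)
    (c : ZMod (p ^ n)) (hd : d g = 1 + (p : ZMod (p ^ n)) * c) (a : ℕ) :
    ∃ u : (ZMod (p ^ n))ˣ, b (g ^ (p ^ a)) = b g * (u * (p : ZMod (p ^ n)) ^ a) := by
  induction a with
  | zero => exact ⟨1, by simp⟩
  | succ a ih =>
    obtain ⟨u, hu⟩ := ih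
    have h1 : ∃ c', d (g ^ (p ^ a)) = 1 + (p : ZMod (p ^ n)) * c' := by
      have : (p : ZMod (p ^ n)) ∣ d g ^ (p ^ a) - 1 := by
        have h2 := sub_dvd_pow_sub_pow (d g) 1 (p ^ a)
        rw [one_pow] at h2
        exact (Dvd.intro c (by rw [hd]; ring)).trans h2
      obtain ⟨c', hc'⟩ := this
      exact ⟨c', by rw [map_pow]; linear_combination hc'⟩
    obtain ⟨c', hc'⟩ := h1
    obtain ⟨w, hw⟩ := aux_geom p hodd n c'
    refine ⟨u * w, ?_⟩
    rw [pow_succ, pow_mul, aux_bpow hb, hu, hc', hw]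
    push_cast
    ring

/-- the subgroup where the cocycle agrees with the coboundary of `t` -/
def auxSub (hb : ∀ g h, b (g * h) = b h + b g * d h)
    (hx : ∀ g h, x (g * h) = x g + x h + b g * y h)
    (hy : ∀ g h, y (g * h) = y g + d g * y h) (t : ZMod (p ^ n)) : Subgroup G where
  carrier := {g | x g = t * b g ∧ y g = t * (d g - 1)}
  one_mem' := by
    have h1 := hb 1 1
    have h2 := hx 1 1
    have h3 := hy 1 1
    simp at h1 h2 h3
    simp [h1, h3] at h2
    simp [h1, h2, h3]
  mul_mem' := by
    rintro g h ⟨h1, h2⟩ ⟨h3, h4⟩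
    refine ⟨?_, ?_⟩
    · rw [hx, hb, h1, h3, h4]; ring
    · rw [hy, map_mul, h2, h4]; ring
  inv_mem' := by
    rintro g ⟨h1, h2⟩
    have e1 := hb 1 1
    have e2 := hx 1 1
    have e3 := hy 1 1
    simp at e1 e2 e3
    simp [e1, e3] at e2
    have a1 := hb g g⁻¹
    have a2 := hx g g⁻¹
    have a3 := hy g⁻¹ g
    have a4 := map_mul d g⁻¹ g
    have a5 := hx g⁻¹ g
    have a6 := hb g⁻¹ g
    simp only [mul_inv_cancel, inv_mul_cancel, e1, e2, e3, map_one] at a1 a2 a3 a4 a5 a6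
    have hyi : y g⁻¹ = t * (d g⁻¹ - 1) := by
      rw [h2] at a3; linear_combination -a3 + t * a4
    refine ⟨?_, hyi⟩
    rw [h1, hyi] at a2
    linear_combination -a2 + t * a1

lemma aux_core (hp : p.Prime) (hodd : Odd p)
    (hb : ∀ g h, b (g * h) = b h + b g * d h)
    (hx : ∀ g h, x (g * h) = x g + x h + b g * y h)
    (hy : ∀ g h, y (g * h) = y g + d g * y h)
    (hloc : ∀ g, ∃ t, x g = t * b g ∧ y g = t * (d g - 1)) :
    ∃ t, ∀ g, x g = t * b g ∧ y g = t * (d g - 1) := by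
  have : NeZero (p ^ n) := ⟨pow_ne_zero _ hp.ne_zero⟩
  have hb1 : b 1 = 0 := by
    have := hb 1 1
    simpa using this
  -- generator of image of d
  obtain ⟨σ, hσ⟩ : ∃ σ : G, ∀ g : G, ∃ k : ℤ, d (g * σ ^ k) = 1 := by
    have hcyc : IsCyclic (ZMod (p ^ n))ˣ :=
      ZMod.isCyclic_units_of_prime_pow p hp (by rintro rfl; exact absurd hodd (by decide)) n
    let D := (d.toHomUnits).range
    obtain ⟨⟨_, σ, rfl⟩, h⟩ := IsCyclic.exists_generator (α := D)
    refine ⟨σ, fun g => ?_⟩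
    obtain ⟨k, hk⟩ := h ⟨d.toHomUnits g, g, rfl⟩
    refine ⟨-k, ?_⟩
    have hk' : d.toHomUnits σ ^ k = d.toHomUnits g := by
      simpa using congrArg Subtype.val hk
    have : d.toHomUnits (g * σ ^ (-k)) = 1 := by
      rw [map_mul, map_zpow, _root_.zpow_neg, hk', mul_inv_cancel]
    exact congrArg Units.val this
  -- generator of kernel
  obtain ⟨τ, hτ1, hτ⟩ : ∃ τ : G, d τ = 1 ∧ ∀ g : G, d g = 1 → ∃ k : ℤ, b g = k • b τ := by
    let B : AddSubgroup (ZMod (p ^ n)) :=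
      { carrier := {r | ∃ g, d g = 1 ∧ b g = r}
        zero_mem' := ⟨1, by simp, hb1⟩
        add_mem' := by
          rintro _ _ ⟨g, hg, rfl⟩ ⟨h, hh, rfl⟩
          exact ⟨g * h, by simp [hg, hh], by rw [hb, hh]; ring⟩
        neg_mem' := by
          rintro _ ⟨g, hg, rfl⟩
          have h1 : d g⁻¹ = 1 := by
            have := map_mul d g g⁻¹
            rw [mul_inv_cancel, map_one, hg, one_mul] at this
            exact this.symm
          refine ⟨g⁻¹, h1, ?_⟩
          have := hb g g⁻¹
          rw [mul_inv_cancel, hb1, h1] at this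
          linear_combination -this }
    obtain ⟨⟨_, τ, h1, rfl⟩, h⟩ := IsAddCyclic.exists_generator (α := B)
    refine ⟨τ, h1, fun g hg => ?_⟩
    obtain ⟨k, hk⟩ := h ⟨b g, g, hg, rfl⟩
    exact ⟨k, by simpa using (congrArg Subtype.val hk).symm⟩
  -- powers of τ
  have hτb : ∀ r : ZMod (p ^ n), ∃ g : G, d g = 1 ∧ b g = r * b τ ∧
      (∀ t, g ∈ auxSub hb hx hy t ∨ τ ∉ auxSub hb hx hy t) ∧ x g = r * x τ ∧ y g = 0 := by
    intro r
    have hyτ : ∀ g, d g = 1 → y g = 0 := by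
      intro g hg
      obtain ⟨t, -, ht⟩ := hloc g
      rw [ht, hg]; ring
    have hd1 : d (τ ^ r.val) = 1 := by simp [hτ1]
    have hxp : ∀ k : ℕ, x (τ ^ k) = k * x τ := by
      intro k
      induction k with
      | zero =>
        obtain ⟨t, ht, -⟩ := hloc 1
        simp [ht, hb1]
      | succ k ih => rw [pow_succ, hx, ih, hyτ τ hτ1]; push_cast; ring
    refine ⟨τ ^ r.val, hd1, ?_, ?_, ?_, hyτ _ hd1⟩
    · rw [aux_bpow hb, hτ1]; simp [mul_comm]
    · intro t
      by_cases h : τ ∈ auxSub hb hx hy t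
      · exact Or.inl (pow_mem h _)
      · exact Or.inr h
    · rw [hxp]; simp
  -- assembly
  have key : ∀ (t : ZMod (p ^ n)), τ ∈ auxSub hb hx hy t → σ ∈ auxSub hb hx hy t →
      ∀ g, x g = t * b g ∧ y g = t * (d g - 1) := by
    intro t h1 h2 g
    suffices g ∈ auxSub hb hx hy t from this
    obtain ⟨k, hk⟩ := hσ g
    rw [← Subgroup.mul_mem_cancel_right _ (zpow_mem h2 k)]
    obtain ⟨m, hm⟩ := hτ _ hk
    obtain ⟨g', hg1, hg2, hg3, -⟩ := hτb (-m)
    have hg' := (hg3 t).resolve_right (not_not.2 h1)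
    rw [← Subgroup.mul_mem_cancel_right _ hg']
    set z := g * σ ^ k * g' with hz
    have hdz : d z = 1 := by rw [hz, map_mul, hk, hg1, one_mul]
    have hbz : b z = 0 := by
      rw [hz, hb, hm, hg1, hg2, zsmul_eq_mul]; ring
    obtain ⟨s, hs1, hs2⟩ := hloc z
    exact ⟨by rw [hs1, hbz]; ring, by rw [hs2, hdz]; ring⟩
  obtain ⟨t1, ht1, ht1'⟩ := hloc τ
  have mkτ : ∀ t, t * b τ = t1 * b τ → τ ∈ auxSub hb hx hy t := fun t ht =>
    ⟨by rw [ht1, ht], by rw [ht1', hτ1]; ring⟩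
  have dunit : ∀ g, IsUnit (d g) := fun g => (Group.isUnit g).map d
  obtain ⟨t0, ht0, ht0'⟩ := hloc σ
  obtain ⟨u, l, hul⟩ := aux_decomp p hp n (d σ - 1)
  rcases l with _ | l
  · -- d σ - 1 a unit
    refine ⟨t0, key t0 (mkτ _ ?_) ⟨ht0, ht0'⟩⟩
    obtain ⟨s, hs1, hs2⟩ := hloc (τ * σ)
    rw [hx, hb, ht1, ht0, ht0'] at hs1
    rw [hy, map_mul, hτ1, ht1', hτ1, ht0'] at hs2
    have hst : (s - t0) * u = 0 := by
      rw [pow_zero, mul_one] at hul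
      linear_combination -hs2 - (s - t0) * hul
    rw [Units.mul_left_eq_zero, sub_eq_zero] at hst
    subst hst
    linear_combination -hs1
  · obtain ⟨u1, k1, h1⟩ := aux_decomp p hp n (b σ)
    obtain ⟨u2, k2, h2⟩ := aux_decomp p hp n (b τ)
    rcases le_or_gt k2 k1 with hk | hk
    · -- b τ divides b σ
      obtain ⟨q, hq⟩ : ∃ q, b σ = q * b τ := by
        obtain ⟨m, rfl⟩ := Nat.exists_eq_add_of_le hk
        refine ⟨u1 * (p : ZMod (p ^ n)) ^ m * ↑u2⁻¹, ?_⟩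
        rw [h1, h2, pow_add]
        have := u2.inv_mul
        linear_combination (-(u1 : ZMod (p ^ n)) * (p : ZMod (p ^ n)) ^ m * (p : ZMod (p ^ n)) ^ k2) * this
      obtain ⟨δ, hδ⟩ := dunit σ
      obtain ⟨g, hg1, hg2, hg3, -⟩ := hτb (-q * ↑δ⁻¹)
      have hbg : b (g * σ) = 0 := by
        rw [hb, hg2, hq, ← hδ]
        have := δ.inv_mul
        linear_combination (-q * b τ) * this
      have hdg : d (g * σ) = d σ := by rw [map_mul, hg1, one_mul]
      obtain ⟨t2, h3, h4⟩ := hloc (g * σ)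
      obtain ⟨s, hs1, hs2⟩ := hloc (τ * (g * σ))
      rw [hx, hb, ht1, h3, h4, hbg, hdg] at hs1
      rw [hy, map_mul, hτ1, ht1', hτ1, h4, hdg] at hs2
      have hτs : τ ∈ auxSub hb hx hy s := mkτ s (by linear_combination (b τ) * hs2 - hs1)
      refine ⟨s, key s hτs ?_⟩
      rw [← Subgroup.mul_mem_cancel_left _ ((hg3 s).resolve_right (not_not.2 hτs))]
      exact ⟨by rw [h3, hbg]; ring, by rw [h4, hdg]; linear_combination hs2⟩
    · obtain ⟨a, rfl⟩ := Nat.exists_eq_add_of_le hk.le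
      obtain ⟨w, hw⟩ := aux_bpp hodd hb σ (u * (p : ZMod (p ^ n)) ^ l)
        (by linear_combination hul) a
      have hσm : σ ∈ auxSub hb hx hy t0 := ⟨ht0, ht0'⟩
      obtain ⟨h3, h4⟩ : σ ^ p ^ a ∈ auxSub hb hx hy t0 := pow_mem hσm _
      obtain ⟨δ, hδ⟩ := dunit (σ ^ p ^ a)
      set ρ := σ ^ p ^ a
      have hbρ : b ρ = ((w * u1 * u2⁻¹ : (ZMod (p ^ n))ˣ) : ZMod (p ^ n)) * b τ := by
        rw [hw, h1, h2, pow_add]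
        push_cast
        have := u2.inv_mul
        linear_combination (-(u1 : ZMod (p ^ n)) * w * (p : ZMod (p ^ n)) ^ k1 * (p : ZMod (p ^ n)) ^ a) * this
      set ε := w * u1 * u2⁻¹
      obtain ⟨g, hg1, hg2, -, hg4, hg5⟩ := hτb (-(ε * δ⁻¹ : (ZMod (p ^ n))ˣ))
      obtain ⟨s, hs1, hs2⟩ := hloc (g * ρ)
      have hbg : b (g * ρ) = 0 := by
        rw [hb, hg2, hbρ, ← hδ]
        push_cast
        have := δ.inv_mul
        linear_combination (-ε * b τ) * this
      rw [hbg, hx, h3, h4, hg4, hg2, hbρ, ht1, ← hδ] at hs1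
      refine ⟨t0, key t0 (mkτ _ ?_) hσm⟩
      have : (t0 * b τ - t1 * b τ) * ((ε * δ⁻¹ : (ZMod (p ^ n))ˣ) : ZMod (p ^ n)) = 0 := by
        push_cast at hs1 ⊢
        have := δ.inv_mul
        linear_combination hs1 + (t0 * ε * b τ) * this
      rw [Units.mul_left_eq_zero, sub_eq_zero] at this
      exact this

end core

lemma aux_bezout (p : ℕ) (hp : p.Prime) (n : ℕ) (hn : 1 ≤ n)
    (Q : Fin 2 → ZMod (p ^ n)) (hQ : addOrderOf Q = p ^ n) :
    ∃ α β, α * Q 0 + β * Q 1 = 1 := by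
  obtain ⟨u, k, h0⟩ := aux_decomp p hp n (Q 0)
  obtain ⟨v, l, h1⟩ := aux_decomp p hp n (Q 1)
  rcases k with _ | k
  · exact ⟨↑u⁻¹, 0, by simp [h0]⟩
  rcases l with _ | l
  · exact ⟨0, ↑v⁻¹, by simp [h1]⟩
  exfalso
  obtain ⟨m, rfl⟩ := Nat.exists_eq_add_of_le' hn
  have hz : (p : ZMod (p ^ (m + 1))) ^ (m + 1) = 0 := by
    have := ZMod.natCast_self (p ^ (m + 1))
    push_cast at this
    exact this
  have h2 : (p ^ m) • Q = 0 := by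
    funext i
    fin_cases i
    · simp only [Fin.zero_eta, Pi.smul_apply, nsmul_eq_mul, h0, Pi.zero_apply]
      push_cast
      linear_combination (u * (p : ZMod (p ^ (m + 1))) ^ k) * hz
    · simp only [Fin.mk_one, Pi.smul_apply, nsmul_eq_mul, h1, Pi.zero_apply]
      push_cast
      linear_combination (v * (p : ZMod (p ^ (m + 1))) ^ l) * hz
  have h3 := addOrderOf_dvd_of_nsmul_eq_zero h2
  rw [hQ, Nat.pow_dvd_pow_iff_le_right hp.one_lt] at h3
  omega

/-- Let `p` be an odd prime, `n ≥ 1`, and `G ≤ GL₂(ℤ/pⁿℤ)` a subgroup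
fixing a vector `Q ∈ (ℤ/pⁿℤ)²` of order `pⁿ`.  Then `H¹_loc(G, (ℤ/pⁿℤ)²) = 0`:
every cocycle on `G` with values in `(ℤ/pⁿℤ)²` satisfying the local conditions is a
coboundary. -/
theorem statement5 (p : ℕ) (hp : p.Prime) (hodd : Odd p) (n : ℕ) (hn : 1 ≤ n)
    (G : Subgroup (GL (Fin 2) (ZMod (p ^ n))))
    (Q : Fin 2 → ZMod (p ^ n)) (hQ : addOrderOf Q = p ^ n)
    (hfix : ∀ g ∈ G, (g : Matrix (Fin 2) (Fin 2) (ZMod (p ^ n))) *ᵥ Q = Q)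
    (Z : G → Fin 2 → ZMod (p ^ n))
    (hZ : ∀ g h : G, Z (g * h) = Z g +
      ((g : GL (Fin 2) (ZMod (p ^ n))) : Matrix (Fin 2) (Fin 2) (ZMod (p ^ n))) *ᵥ Z h)
    (hloc : ∀ g : G, ∃ v : Fin 2 → ZMod (p ^ n),
      Z g = ((g : GL (Fin 2) (ZMod (p ^ n))) : Matrix (Fin 2) (Fin 2) (ZMod (p ^ n))) *ᵥ v - v) :
    ∃ v : Fin 2 → ZMod (p ^ n), ∀ g : G,
      Z g = ((g : GL (Fin 2) (ZMod (p ^ n))) : Matrix (Fin 2) (Fin 2) (ZMod (p ^ n))) *ᵥ v - v := by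
  obtain ⟨α, β, hαβ⟩ := aux_bezout p hp n hn Q hQ
  have hf : ∀ g : G, (g.1.1 0 0 * Q 0 + g.1.1 0 1 * Q 1 = Q 0) ∧
      (g.1.1 1 0 * Q 0 + g.1.1 1 1 * Q 1 = Q 1) := by
    intro g
    have h := hfix g.1 g.2
    have h0 := congrFun h 0
    have h1 := congrFun h 1
    simp only [Matrix.mulVec, dotProduct, Fin.sum_univ_two] at h0 h1
    exact ⟨h0, h1⟩
  let A : (Fin 2 → ZMod (p ^ n)) → ZMod (p ^ n) := fun v => α * v 0 + β * v 1
  let F : (Fin 2 → ZMod (p ^ n)) → ZMod (p ^ n) := fun v => -Q 1 * v 0 + Q 0 * v 1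
  let e : Fin 2 → ZMod (p ^ n) := ![-β, α]
  have hv0 : ∀ v, v 0 = A v * Q 0 - β * F v := by
    intro v
    simp only [A, F]
    linear_combination -(v 0) * hαβ
  have hv1 : ∀ v, v 1 = A v * Q 1 + α * F v := by
    intro v
    simp only [A, F]
    linear_combination -(v 1) * hαβ
  have hAF : ∀ v w, A v = A w → F v = F w → v = w := by
    intro v w h1 h2
    funext i
    fin_cases i
    · simp only [Fin.zero_eta]
      rw [hv0 v, hv0 w, h1, h2]
    · simp only [Fin.mk_one]
      rw [hv1 v, hv1 w, h1, h2]
  have hA : ∀ (g : G) v, A (g.1.1 *ᵥ v) = A v + A (g.1.1 *ᵥ e) * F v := by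
    intro g v
    obtain ⟨a1, a2⟩ := hf g
    have e0 := hv0 v
    have e1 := hv1 v
    have hAe : A (g.1.1 *ᵥ e) = α * (g.1.1 0 0 * -β + g.1.1 0 1 * α)
        + β * (g.1.1 1 0 * -β + g.1.1 1 1 * α) := by
      simp [A, e, Matrix.mulVec, dotProduct, Fin.sum_univ_two]
    have hAv : A (g.1.1 *ᵥ v) = α * (g.1.1 0 0 * v 0 + g.1.1 0 1 * v 1)
        + β * (g.1.1 1 0 * v 0 + g.1.1 1 1 * v 1) := by
      simp [A, Matrix.mulVec, dotProduct, Fin.sum_univ_two]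
    rw [hAe, hAv]
    linear_combination (α * g.1.1 0 0 + β * g.1.1 1 0) * e0 + (α * g.1.1 0 1 + β * g.1.1 1 1) * e1
      + α * A v * a1 + β * A v * a2 + A v * hαβ
  have hF : ∀ (g : G) v, F (g.1.1 *ᵥ v) = F (g.1.1 *ᵥ e) * F v := by
    intro g v
    obtain ⟨a1, a2⟩ := hf g
    have e0 := hv0 v
    have e1 := hv1 v
    have hAe : F (g.1.1 *ᵥ e) = -Q 1 * (g.1.1 0 0 * -β + g.1.1 0 1 * α)
        + Q 0 * (g.1.1 1 0 * -β + g.1.1 1 1 * α) := by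
      simp [F, e, Matrix.mulVec, dotProduct, Fin.sum_univ_two]
    have hAv : F (g.1.1 *ᵥ v) = -Q 1 * (g.1.1 0 0 * v 0 + g.1.1 0 1 * v 1)
        + Q 0 * (g.1.1 1 0 * v 0 + g.1.1 1 1 * v 1) := by
      simp [F, Matrix.mulVec, dotProduct, Fin.sum_univ_two]
    rw [hAe, hAv]
    linear_combination (-Q 1 * g.1.1 0 0 + Q 0 * g.1.1 1 0) * e0
      + (-Q 1 * g.1.1 0 1 + Q 0 * g.1.1 1 1) * e1 - Q 1 * A v * a1 + Q 0 * A v * a2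
  have hAadd : ∀ v w, A (v + w) = A v + A w := by
    intro v w
    simp only [A, Pi.add_apply]; ring
  have hFadd : ∀ v w, F (v + w) = F v + F w := by
    intro v w
    simp only [F, Pi.add_apply]; ring
  have hAsub : ∀ v w, A (v - w) = A v - A w := by
    intro v w
    simp only [A, Pi.sub_apply]; ring
  have hFsub : ∀ v w, F (v - w) = F v - F w := by
    intro v w
    simp only [F, Pi.sub_apply]; ring
  have hFe : F e = 1 := by
    simp [F, e]
    linear_combination hαβ
  have hAe : A e = 0 := by
    simp [A, e]
    ring
  have hmul : ∀ (g h : G) v, (g * h).1.1 *ᵥ v = g.1.1 *ᵥ (h.1.1 *ᵥ v) := by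
    intro g h v
    rw [Matrix.mulVec_mulVec]
    rfl
  let D : G →* ZMod (p ^ n) :=
    { toFun := fun g => F (g.1.1 *ᵥ e)
      map_one' := by
        simp [hFe]
      map_mul' := by
        intro g h
        rw [hmul, hF] }
  have hD : ∀ g, D g = F (g.1.1 *ᵥ e) := fun _ => rfl
  obtain ⟨t, ht⟩ := aux_core (G := G) (d := D) (b := fun g => A (g.1.1 *ᵥ e))
    (x := fun g => A (Z g)) (y := fun g => F (Z g)) hp hodd
    (by intro g h; simp only [hD]; rw [hmul, hA])
    (by intro g h; simp only [hZ]; rw [hAadd, hA, ← add_assoc])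
    (by intro g h; simp only [hZ, hD]; rw [hFadd, hF])
    (by
      intro g
      obtain ⟨v, hv⟩ := hloc g
      refine ⟨F v, ?_, ?_⟩
      · simp only [hv]; rw [hAsub, hA]; ring
      · simp only [hv, hD]; rw [hFsub, hF]; ring)
  have hFt : F (t • e) = t := by
    have : F (t • e) = t * F e := by
      simp only [F, Pi.smul_apply, smul_eq_mul]; ring
    rw [this, hFe, mul_one]
  refine ⟨t • e, fun g => hAF _ _ ?_ ?_⟩
  · rw [(ht g).1, hAsub, hA g (t • e), hFt]; ring
  · rw [(ht g).2, hFsub, hF g (t • e), hFt, hD]; ring
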